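/- arXiv:1003.1077 — 2 statements merged into one kernel-verified Lean document; each statement's English description precedes it below -/
import Mathlib

section
/- Let 0 < T < T_c and ε > 0, let u(x) = u₊·tanh(μx) with u₊ = √(3(T_c/T − 1)) and μ = √(T_c − T)/(ε√2), and let f₄(v) = T_c(1−v²)/2 + T(v²/2 + v⁴/12). Then the total free energy of the profile over ℝ (with the additive constant chosen so that the density vanishes at the binodal value u₊) is finite and equals ∫_ℝ [ (f₄(u(x)) − f₄(u₊)) + (ε²/2)·u'(x)² ] dx = 2√2·ε·(T_c − T)^{3/2}/T. -/
open MeasureTheory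

lemma aux_hasDerivAt_tanh (x : ℝ) : HasDerivAt Real.tanh (1 - Real.tanh x ^ 2) x := by
  have h : Real.tanh = fun y => Real.sinh y / Real.cosh y := by
    funext y; exact Real.tanh_eq_sinh_div_cosh y
  have hc : Real.cosh x ≠ 0 := (Real.cosh_pos x).ne'
  have := (Real.hasDerivAt_sinh x).div (Real.hasDerivAt_cosh x) hc
  rw [h]
  refine this.congr_deriv ?_
  field_simp

lemma aux_tanh_top : Filter.Tendsto Real.tanh Filter.atTop (nhds 1) := by
  have h : Real.tanh = fun y => 1 - 2 / (Real.exp (2 * y) + 1) := by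
    funext y
    rw [Real.tanh_eq_sinh_div_cosh, Real.sinh_eq, Real.cosh_eq, Real.exp_neg,
      show 2 * y = y + y by ring, Real.exp_add]
    have := Real.exp_pos y
    field_simp
    ring
  rw [h]
  have h1 : Filter.Tendsto (fun y : ℝ => Real.exp (2 * y) + 1) Filter.atTop Filter.atTop :=
    Filter.tendsto_atTop_add_const_right _ _ (Real.tendsto_exp_atTop.comp
      (Filter.tendsto_id.const_mul_atTop (by norm_num)))
  simpa using (tendsto_const_nhds (x := (1 : ℝ))).sub (h1.const_div_atTop 2)

lemma aux_tanh_bot : Filter.Tendsto Real.tanh Filter.atBot (nhds (-1)) := by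
  have h := (aux_tanh_top.comp Filter.tendsto_neg_atBot_atTop).neg
  refine h.congr fun x => ?_
  simp

lemma aux_integral (μ : ℝ) (hμ : 0 < μ) :
    Integrable (fun x : ℝ => (1 - Real.tanh (μ * x) ^ 2) ^ 2) ∧
    ∫ x : ℝ, (1 - Real.tanh (μ * x) ^ 2) ^ 2 = 4 / (3 * μ) := by
  set g : ℝ → ℝ := fun x => (Real.tanh (μ * x) - Real.tanh (μ * x) ^ 3 / 3) / μ with hg
  have hd : ∀ x, HasDerivAt g ((1 - Real.tanh (μ * x) ^ 2) ^ 2) x := by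
    intro x
    have h1 : HasDerivAt (fun x => Real.tanh (μ * x)) ((1 - Real.tanh (μ * x) ^ 2) * μ) x := by
      have := (aux_hasDerivAt_tanh (μ * x)).comp x ((hasDerivAt_id x).const_mul μ)
      simpa using! this
    refine ((h1.sub ((h1.pow 3).div_const 3)).div_const μ).congr_deriv ?_
    field_simp
    norm_num
    ring
  have lim : ∀ (l : Filter ℝ) (a : ℝ), Filter.Tendsto (fun x => Real.tanh (μ * x)) l (nhds a) →
      Filter.Tendsto g l (nhds ((a - a ^ 3 / 3) / μ)) := fun l a h =>
    (h.sub ((h.pow 3).div_const 3)).div_const μ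
  have htop := lim _ _ (aux_tanh_top.comp (Filter.tendsto_id.const_mul_atTop hμ))
  have hbot := lim _ _ (aux_tanh_bot.comp (Filter.tendsto_id.const_mul_atBot hμ))
  have hI : IntegrableOn (fun x : ℝ => (1 - Real.tanh (μ * x) ^ 2) ^ 2) (Set.Ioi 0) :=
    integrableOn_Ioi_deriv_of_nonneg' (fun x _ => hd x) (fun x _ => sq_nonneg _) htop
  have hI2 : IntegrableOn (fun x : ℝ => (1 - Real.tanh (μ * x) ^ 2) ^ 2) (Set.Iic 0) := by
    have h := (integrableOn_Ici_iff_integrableOn_Ioi (by simp)).2 hI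
    have h := IntegrableOn.comp_neg_Iic (c := (0 : ℝ)) (by simpa using h)
    simpa using h
  have hint : Integrable (fun x : ℝ => (1 - Real.tanh (μ * x) ^ 2) ^ 2) := by
    rw [← integrableOn_univ, ← Set.Iic_union_Ioi (a := (0 : ℝ))]
    exact hI2.union hI
  refine ⟨hint, ?_⟩
  rw [integral_of_hasDerivAt_of_tendsto hd hint hbot htop]
  field_simp
  norm_num

/-- the total free energy of the tanh profile over ℝ (normalized so that the
density vanishes at the binodal value `u₊`) is finite and equals `2√2 ε (T_c − T)^{3/2}/T`. -/
theorem tanh_profile_total_free_energy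
    (T Tc ε : ℝ) (hT : 0 < T) (hTTc : T < Tc) (hε : 0 < ε)
    (uplus μ : ℝ)
    (huplus : uplus = Real.sqrt (3 * (Tc / T - 1)))
    (hμ : μ = Real.sqrt (Tc - T) / (ε * Real.sqrt 2))
    (u : ℝ → ℝ) (hu : ∀ x, u x = uplus * Real.tanh (μ * x))
    (f₄ : ℝ → ℝ)
    (hf : ∀ v, f₄ v = Tc * (1 - v ^ 2) / 2 + T * (v ^ 2 / 2 + v ^ 4 / 12)) :
    Integrable (fun x : ℝ => (f₄ (u x) - f₄ uplus) + ε ^ 2 / 2 * (deriv u x) ^ 2) ∧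
    ∫ x : ℝ, ((f₄ (u x) - f₄ uplus) + ε ^ 2 / 2 * (deriv u x) ^ 2)
      = 2 * Real.sqrt 2 * ε * (Tc - T) ^ ((3 : ℝ) / 2) / T := by
  have hD : 0 < Tc - T := sub_pos.2 hTTc
  have hs := Real.sqrt_pos.2 hD
  have h2 : (0 : ℝ) < Real.sqrt 2 := Real.sqrt_pos.2 (by norm_num)
  have hs2 : Real.sqrt (Tc - T) ^ 2 = Tc - T := Real.sq_sqrt hD.le
  have h22 : Real.sqrt 2 ^ 2 = 2 := Real.sq_sqrt (by norm_num)
  have hμ0 : 0 < μ := by rw [hμ]; positivity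
  have hμ2 : ε ^ 2 * μ ^ 2 = (Tc - T) / 2 := by
    rw [hμ, div_pow, mul_pow, hs2, h22]; field_simp
  have hup : T * uplus ^ 2 = 3 * (Tc - T) := by
    rw [huplus, Real.sq_sqrt]
    · field_simp
    · have : 1 < Tc / T := (one_lt_div hT).2 hTTc
      linarith
  have hderiv : ∀ x, deriv u x = uplus * ((1 - Real.tanh (μ * x) ^ 2) * μ) := by
    intro x
    have h1 : HasDerivAt (fun x => Real.tanh (μ * x)) ((1 - Real.tanh (μ * x) ^ 2) * μ) x := by
      have := (aux_hasDerivAt_tanh (μ * x)).comp x ((hasDerivAt_id x).const_mul μ)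
      simpa using! this
    rw [show u = fun x => uplus * Real.tanh (μ * x) from funext hu]
    exact (h1.const_mul uplus).deriv
  have key : (fun x : ℝ => (f₄ (u x) - f₄ uplus) + ε ^ 2 / 2 * (deriv u x) ^ 2)
      = fun x => (3 / 2 * (Tc - T) ^ 2 / T) * (1 - Real.tanh (μ * x) ^ 2) ^ 2 := by
    funext x
    rw [hderiv, hf, hf, hu]
    generalize Real.tanh (μ * x) = t
    have hU : uplus ^ 2 = 3 * (Tc - T) / T := by field_simp; linarith
    have e : ε ^ 2 / 2 * (uplus * ((1 - t ^ 2) * μ)) ^ 2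
        = (ε ^ 2 * μ ^ 2) / 2 * uplus ^ 2 * (1 - t ^ 2) ^ 2 := by ring
    rw [e, hμ2, mul_pow, mul_pow, show uplus ^ 4 = (uplus ^ 2) ^ 2 by ring, hU]
    field_simp
    ring
  obtain ⟨hi, hv⟩ := aux_integral μ hμ0
  rw [key]
  refine ⟨hi.const_mul _, ?_⟩
  rw [integral_const_mul, hv, hμ]
  have hp : (Tc - T) ^ ((3 : ℝ) / 2) = (Tc - T) * Real.sqrt (Tc - T) := by
    rw [Real.sqrt_eq_rpow, show (3 : ℝ) / 2 = 1 + 1 / 2 by norm_num, Real.rpow_add hD,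
      Real.rpow_one]
  rw [hp]
  generalize Real.sqrt (Tc - T) = s at *
  rw [← hs2]
  field_simp
  norm_num
end

section
/- Let 0 < T < T_c. Then there exists a unique β₊ ∈ (0,1) such that −T_c·β₊ + (T/2)·ln((1+β₊)/(1−β₊)) = 0; that is, the logarithmic free energy density f has a unique positive critical point β₊ in (0,1) (the positive binodal point). -/
/-- below the critical temperature there is a unique `β₊ ∈ (0,1)` with
`−T_c β₊ + (T/2)·ln((1+β₊)/(1−β₊)) = 0` (the positive binodal point). -/
theorem unique_positive_binodal_point
    (T Tc : ℝ) (hT : 0 < T) (hTTc : T < Tc) :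
    ∃! β : ℝ, β ∈ Set.Ioo (0 : ℝ) 1 ∧
      -Tc * β + T / 2 * Real.log ((1 + β) / (1 - β)) = 0 := by
  have hTc : 0 < Tc := hT.trans hTTc
  obtain ⟨g, hg⟩ : ∃ g : ℝ → ℝ, g = fun u =>
    -Tc * u + T / 2 * Real.log ((1 + u) / (1 - u)) := ⟨_, rfl⟩
  have hd : ∀ u : ℝ, 0 ≤ u → u < 1 → HasDerivAt g (-Tc + T / (1 - u ^ 2)) u := by
    intro u h0 h1
    have a : (1 - u) ≠ 0 := by linarith
    have b : (1 + u) ≠ 0 := by linarith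
    have c : (1 - u ^ 2) ≠ 0 := by
      have : 1 - u ^ 2 = (1 - u) * (1 + u) := by ring
      rw [this]; exact mul_ne_zero a b
    have h := ((hasDerivAt_id u).const_mul (-Tc)).add
      (((((hasDerivAt_id u).const_add 1).div ((hasDerivAt_id u).const_sub 1) a).log
        (div_ne_zero b a)).const_mul (T / 2))
    rw [hg]
    refine h.congr_deriv ?_
    simp only [id, Pi.div_apply]
    field_simp
    ring
  have hq : 0 < 1 - T / Tc := by rw [sub_pos, div_lt_one hTc]; exact hTTc
  obtain ⟨c, hc⟩ : ∃ c, c = Real.sqrt (1 - T / Tc) := ⟨_, rfl⟩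
  have hc0 : 0 < c := hc ▸ Real.sqrt_pos.2 hq
  have hc2 : c ^ 2 = 1 - T / Tc := by rw [hc]; exact Real.sq_sqrt hq.le
  have hTc2 : T = Tc * (1 - c ^ 2) := by rw [hc2]; field_simp; ring
  have hc1 : c < 1 := by
    have : 0 < T / Tc := by positivity
    nlinarith
  have hcont : ContinuousOn g (Set.Ico 0 1) := fun u hu =>
    (hd u hu.1 hu.2).continuousAt.continuousWithinAt
  have hanti : StrictAntiOn g (Set.Icc 0 c) := by
    refine strictAntiOn_of_deriv_neg (convex_Icc _ _)
      (hcont.mono fun x hx => ⟨hx.1, hx.2.trans_lt hc1⟩) ?_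
    intro x hx
    rw [interior_Icc] at hx
    rw [(hd x hx.1.le (hx.2.trans hc1)).deriv]
    have h1 : 0 < 1 - x ^ 2 := by nlinarith [hx.1, hx.2]
    have : T / (1 - x ^ 2) < Tc := by
      rw [div_lt_iff₀ h1, hTc2]
      exact mul_lt_mul_of_pos_left (by nlinarith [hx.1, hx.2]) hTc
    linarith
  have hmono : StrictMonoOn g (Set.Ico c 1) := by
    refine strictMonoOn_of_deriv_pos (convex_Ico _ _)
      (hcont.mono fun x hx => ⟨hc0.le.trans hx.1, hx.2⟩) ?_
    intro x hx
    rw [interior_Ico] at hx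
    rw [(hd x (hc0.trans hx.1).le hx.2).deriv]
    have h1 : 0 < 1 - x ^ 2 := by nlinarith [hx.1, hx.2]
    have : Tc < T / (1 - x ^ 2) := by
      rw [lt_div_iff₀ h1, hTc2]
      exact mul_lt_mul_of_pos_left (by nlinarith [hx.1, hx.2]) hTc
    linarith
  have hg0 : g 0 = 0 := by simp [hg]
  have hneg : ∀ x, 0 < x → x ≤ c → g x < 0 := fun x h0 h1 =>
    hg0 ▸ hanti ⟨le_rfl, hc0.le⟩ ⟨h0.le, h1⟩ h0
  obtain ⟨b, hb0, hb1, hgb⟩ : ∃ b, 0 < b ∧ b < 1 ∧ 0 < g b := by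
    have hE : 1 < Real.exp (2 * Tc / T) := Real.one_lt_exp_iff.2 (by positivity)
    obtain ⟨E, hEE⟩ : ∃ E, E = Real.exp (2 * Tc / T) := ⟨_, rfl⟩
    rw [← hEE] at hE
    have hp : 0 < E + 1 := by linarith
    have hb1 : (E - 1) / (E + 1) < 1 := by rw [div_lt_one hp]; linarith
    refine ⟨(E - 1) / (E + 1), div_pos (by linarith) hp, hb1, ?_⟩
    have : (1 + (E - 1) / (E + 1)) / (1 - (E - 1) / (E + 1)) = E := by
      have h2 : 1 - (E - 1) / (E + 1) = 2 / (E + 1) := by field_simp; ring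
      rw [h2]; field_simp; ring
    simp only [hg]
    rw [this, hEE, Real.log_exp, ← hEE]
    have h3 : T / 2 * (2 * Tc / T) = Tc := by field_simp
    rw [h3]
    nlinarith
  have hcb : c < b := by
    by_contra h
    linarith [hneg b hb0 (not_lt.1 h)]
  obtain ⟨x, hx, hgx⟩ := intermediate_value_Icc hcb.le
    (hcont.mono fun x hx => ⟨hc0.le.trans hx.1, hx.2.trans_lt hb1⟩)
    (⟨(hneg c hc0 le_rfl).le, hgb.le⟩ : (0 : ℝ) ∈ Set.Icc (g c) (g b))
  refine ⟨x, ⟨⟨hc0.trans_le hx.1, hx.2.trans_lt hb1⟩, by simpa only [hg] using hgx⟩, ?_⟩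
  rintro y ⟨hy, hgy⟩
  have hgy' : g y = 0 := by simpa only [hg] using hgy
  have hcy : c ≤ y := by
    by_contra h
    linarith [hneg y hy.1 (not_le.1 h).le]
  exact hmono.injOn ⟨hcy, hy.2⟩ ⟨hx.1, hx.2.trans_lt hb1⟩ (hgy'.trans hgx.symm)
end
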